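/- Let P_{X,Y} be a pmf on a finite set 𝒳×𝒴 and let P_{X̃,Ỹ} = P_{X̃₀X̃₁,Ỹ₀Ỹ₁} be a pmf on a finite set (𝒳₀×𝒳₁)×(𝒴₀×𝒴₁). Suppose that Σ P_{X̃₁,Ỹ₁}(x,y) ≥ 1 − δ, where the sum ranges over all (x,y) such that the conditional distribution P_{X̃₀,Ỹ₀ | X̃₁=x, Ỹ₁=y} equals P_{X,Y} up to a bijective relabeling of the alphabets. Then Δ_{P_{X̃,Ỹ}} ≥ (1 − δ)·Δ_{P_{X,Y}}. -/

import Mathlib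

open scoped BigOperators
open Matrix
open scoped ComplexOrder

attribute [local instance 10] Classical.propDecidable

noncomputable section

/-- Base-2 Shannon entropy of a finitely supported real function. -/
def shannonEntropy {α : Type*} [Fintype α] (p : α → ℝ) : ℝ :=
  -∑ x, p x * Real.logb 2 (p x)

/-- Von Neumann entropy: base-2 Shannon entropy of the eigenvalue multiset. -/
def vonNeumannEntropy {n : Type*} [Fintype n] [DecidableEq n] (ρ : Matrix n n ℂ) : ℝ :=
  if h : ρ.IsHermitian then shannonEntropy h.eigenvalues else 0

/-- Rank-one outer product `|φ⟩⟨φ|`. -/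
def outer {n : Type*} (φ : n → ℂ) : Matrix n n ℂ :=
  fun i j => φ i * (starRingEnd ℂ) (φ j)

/-- Partial trace over the first tensor factor. -/
def trLeft {m n : Type*} [Fintype m] (ρ : Matrix (m × n) (m × n) ℂ) : Matrix n n ℂ :=
  fun i j => ∑ a, ρ (a, i) (a, j)

section primitives

variable {𝒰 𝒱 : Type*} [Fintype 𝒰] [Fintype 𝒱] [DecidableEq 𝒰] [DecidableEq 𝒱]

def margX (Q : 𝒰 × 𝒱 → ℝ) (u : 𝒰) : ℝ := ∑ v, Q (u, v)

def margY (Q : 𝒰 × 𝒱 → ℝ) (v : 𝒱) : ℝ := ∑ u, Q (u, v)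

/-- Classical base-2 mutual information `I(U;V) = H(U) + H(V) − H(U,V)`. -/
def mutualInfo (Q : 𝒰 × 𝒱 → ℝ) : ℝ :=
  shannonEntropy (margX Q) + shannonEntropy (margY Q) - shannonEntropy Q

/-- The regular embedding `|ψ_θ⟩ = Σ_{u,v} e^{iθ(u,v)} √Q(u,v) |u⟩⊗|v⟩` of `Q`. -/
def regEmbed (Q : 𝒰 × 𝒱 → ℝ) (θ : 𝒰 × 𝒱 → ℝ) : 𝒰 × 𝒱 → ℂ :=
  fun p => Complex.exp ((θ p : ℂ) * Complex.I) * (Real.sqrt (Q p) : ℂ)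

/-- The leakage `Δ(ψ_θ) = S(tr_first |ψ_θ⟩⟨ψ_θ|) − I(U;V)`. -/
def regLeakage (Q : 𝒰 × 𝒱 → ℝ) (θ : 𝒰 × 𝒱 → ℝ) : ℝ :=
  vonNeumannEntropy (trLeft (outer (regEmbed Q θ))) - mutualInfo Q

/-- The leakage of the primitive `Q`: minimal leakage over regular embeddings. -/
def primLeakage (Q : 𝒰 × 𝒱 → ℝ) : ℝ := ⨅ θ : 𝒰 × 𝒱 → ℝ, regLeakage Q θ

end primitives

/-!
The diagonal of the reduced state `ρ` on `V` is the marginal of `V`, so the leakage is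
`H(U, V) - H(U) - C(ρ)`, where `C(ρ) = H(diag ρ) - S(ρ)` is the relative entropy of coherence.
Splitting `U` as `A × ι` splits `H(U, V) - H(U)` into the sum of the same expressions over the
blocks `i : ι`, whereas `C` is subadditive; so the leakages of the blocks sum to at most the leakage
of the whole. Both reduced states of a pure state have the same entropy, so the leakage is symmetric
in `U` and `V`, and the inequality also holds for the blocks of `(𝒳₀ × 𝒳₁) × (𝒴₀ × 𝒴₁)` cut out by
`𝒳₁ × 𝒴₁`. Leakage being homogeneous, a block proportional to a relabeling of `P` contributes its
mass times the leakage of `P`, and the remaining blocks contribute nonnegatively.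

Subadditivity of `C` holds for the contribution of each basis vector `k`. As
`λ (log λ - log m) = lim_{T → ∞} (∫₀ᵀ λ² / (m + t λ) dt - λ log T)`, that contribution is the limit
of `∫₀ᵀ ⟨k|ρ (ρₖₖ + t ρ)⁻¹ ρ|k⟩ dt - ρₖₖ log T`, whose integrand is subadditive, being a supremum
of functions linear in `ρ`.
-/

section ShannonEntropy

variable {α β : Type*} [Fintype α] [Fintype β]

lemma shannonEntropy_eq_sum_negMulLog_div (p : α → ℝ) :
    shannonEntropy p = (∑ x, Real.negMulLog (p x)) / Real.log 2 := by
  simp only [shannonEntropy, Real.logb, Real.negMulLog, Finset.sum_div, ← Finset.sum_neg_distrib]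
  exact Finset.sum_congr rfl fun _ _ => by ring

lemma shannonEntropy_comp_equiv (e : α ≃ β) (p : β → ℝ) :
    shannonEntropy (p ∘ e) = shannonEntropy p :=
  congrArg Neg.neg (e.sum_comp fun x => p x * Real.logb 2 (p x))

lemma shannonEntropy_smul (c : ℝ) (p : α → ℝ) :
    shannonEntropy (c • p)
      = c * shannonEntropy p + (∑ x, p x) * (Real.negMulLog c / Real.log 2) := by
  simp only [shannonEntropy_eq_sum_negMulLog_div, Pi.smul_apply, smul_eq_mul, Real.negMulLog_mul,
    Finset.sum_add_distrib, ← Finset.sum_mul, ← Finset.mul_sum]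
  ring

lemma sum_shannonEntropy_slice (p : α × β → ℝ) :
    ∑ b, shannonEntropy (fun a => p (a, b)) = shannonEntropy p := by
  simp only [shannonEntropy, Fintype.sum_prod_type_right, Finset.sum_neg_distrib]

end ShannonEntropy

section VonNeumannEntropy

variable {m n : Type*} [Fintype m] [DecidableEq m] [Fintype n] [DecidableEq n]

lemma vonNeumannEntropy_eq_sum_roots {ρ : Matrix n n ℂ} (h : ρ.IsHermitian) :
    vonNeumannEntropy ρ
      = (ρ.charpoly.roots.map fun z => Real.negMulLog z.re).sum / Real.log 2 := by
  rw [vonNeumannEntropy, dif_pos h, shannonEntropy_eq_sum_negMulLog_div,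
    h.roots_charpoly_eq_eigenvalues, Multiset.map_map]
  rfl

lemma vonNeumannEntropy_congr_of_charpoly_eq {ρ : Matrix m m ℂ} {σ : Matrix n n ℂ}
    (hρ : ρ.IsHermitian) (hσ : σ.IsHermitian) (h : ρ.charpoly = σ.charpoly) :
    vonNeumannEntropy ρ = vonNeumannEntropy σ := by
  rw [vonNeumannEntropy_eq_sum_roots hρ, vonNeumannEntropy_eq_sum_roots hσ, h]

lemma vonNeumannEntropy_transpose {ρ : Matrix n n ℂ} (h : ρ.IsHermitian) :
    vonNeumannEntropy ρᵀ = vonNeumannEntropy ρ :=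
  vonNeumannEntropy_congr_of_charpoly_eq h.transpose h (charpoly_transpose ρ)

lemma vonNeumannEntropy_submatrix_equiv (e : m ≃ n) {ρ : Matrix n n ℂ} (h : ρ.IsHermitian) :
    vonNeumannEntropy (ρ.submatrix e e) = vonNeumannEntropy ρ :=
  vonNeumannEntropy_congr_of_charpoly_eq (h.submatrix e) h (charpoly_reindex e.symm ρ)

lemma vonNeumannEntropy_mul_comm {A : Matrix m n ℂ} {B : Matrix n m ℂ}
    (hAB : (A * B).IsHermitian) (hBA : (B * A).IsHermitian) :
    vonNeumannEntropy (A * B) = vonNeumannEntropy (B * A) := by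
  have sum_roots (k : ℕ) {p : Polynomial ℂ} (hp : p.Monic) :
      ((Polynomial.X ^ k * p).roots.map fun z : ℂ => Real.negMulLog z.re).sum
        = (p.roots.map fun z : ℂ => Real.negMulLog z.re).sum := by
    rw [Polynomial.roots_mul (mul_ne_zero (pow_ne_zero k Polynomial.X_ne_zero) hp.ne_zero)]
    simp [Multiset.map_nsmul, Multiset.sum_nsmul]
  rw [vonNeumannEntropy_eq_sum_roots hAB, vonNeumannEntropy_eq_sum_roots hBA,
    ← sum_roots (Fintype.card n) (charpoly_monic _), charpoly_mul_comm',
    sum_roots _ (charpoly_monic _)]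

lemma isHermitian_diagonal_ofReal {ι : Type*} [DecidableEq ι] (d : ι → ℝ) :
    (diagonal fun i => (d i : ℂ)).IsHermitian :=
  isHermitian_diagonal_of_self_adjoint _ (by ext; simp)

lemma vonNeumannEntropy_diagonal (d : n → ℝ) :
    vonNeumannEntropy (diagonal fun i => (d i : ℂ)) = shannonEntropy d := by
  rw [vonNeumannEntropy_eq_sum_roots (isHermitian_diagonal_ofReal d), charpoly_diagonal,
    Polynomial.roots_prod _ _ (Finset.prod_ne_zero_iff.2 fun _ _ => Polynomial.X_sub_C_ne_zero _),
    shannonEntropy_eq_sum_negMulLog_div]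
  simp [Multiset.bind_singleton]

lemma charpoly_smul_eq_charpoly_diagonal {ρ : Matrix n n ℂ} (h : ρ.IsHermitian) (c : ℝ) :
    (c • ρ).charpoly = (diagonal fun i => ((c * h.eigenvalues i : ℝ) : ℂ)).charpoly := by
  have hdiag : (diagonal fun i => ((c * h.eigenvalues i : ℝ) : ℂ))
      = c • diagonal (RCLike.ofReal ∘ h.eigenvalues) := by
    ext i j
    simp [diagonal_apply]
  conv_lhs => rw [h.spectral_theorem, Unitary.conjStarAlgAut_apply, ← smul_mul_assoc,
    charpoly_mul_comm, mul_smul_comm, ← mul_assoc, Unitary.coe_star_mul_self, one_mul]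
  rw [hdiag]

lemma vonNeumannEntropy_smul {ρ : Matrix n n ℂ} (h : ρ.IsHermitian) (c : ℝ) :
    vonNeumannEntropy (c • ρ)
      = c * vonNeumannEntropy ρ + ρ.trace.re * (Real.negMulLog c / Real.log 2) := by
  have htrace : ρ.trace.re = ∑ i, h.eigenvalues i := by
    rw [h.trace_eq_sum_eigenvalues, Complex.re_sum]
    rfl
  rw [vonNeumannEntropy_congr_of_charpoly_eq (h.smul (IsSelfAdjoint.all c))
      (isHermitian_diagonal_ofReal _) (charpoly_smul_eq_charpoly_diagonal h c),
    vonNeumannEntropy_diagonal, htrace, vonNeumannEntropy, dif_pos h, ← shannonEntropy_smul]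
  rfl

end VonNeumannEntropy

section Logarithm

open Filter Topology

lemma hasDerivAt_mul_log_add_mul {a l m t : ℝ} (h : a ≠ 0 → m + t * l ≠ 0) :
    HasDerivAt (fun t => a * Real.log (m + t * l)) (a * (l / (m + t * l))) t := by
  rcases eq_or_ne a 0 with rfl | ha
  · simpa using hasDerivAt_const t (0 : ℝ)
  · have hlin : HasDerivAt (fun t : ℝ => m + t * l) l t := by
      simpa using ((hasDerivAt_id t).mul_const l).const_add m
    exact (hlin.log (h ha)).const_mul a

lemma tendsto_mul_log_add_mul_sub_log {a l : ℝ} (m : ℝ) (h : a ≠ 0 → 0 < l) :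
    Tendsto (fun t => a * (Real.log (m + t * l) - Real.log t)) atTop (𝓝 (a * Real.log l)) := by
  rcases eq_or_ne a 0 with rfl | ha
  · simp
  have hl := h ha
  have hlim := (Real.tendsto_log_comp_add_sub_log (m / l)).const_add (Real.log l)
  rw [add_zero] at hlim
  refine (hlim.congr' ?_).const_mul a
  filter_upwards [eventually_gt_atTop (-(m / l))] with t ht
  have hfactor : m + t * l = l * (t + m / l) := by
    field_simp
    ring
  rw [hfactor, Real.log_mul hl.ne' (by linarith)]
  ring

end Logarithm

section Coherence

open Filter Topology

variable {n : Type*} [Fintype n] [DecidableEq n] {ρ : Matrix n n ℂ}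

/-- The coordinates of the vector `x` in the eigenbasis of the Hermitian matrix `ρ`. -/
def eigenCoord (h : ρ.IsHermitian) (x : n → ℂ) : n → ℂ :=
  (h.eigenvectorUnitary : Matrix n n ℂ)ᴴ *ᵥ x

lemma eigenCoord_eigenvectorUnitary_mulVec (h : ρ.IsHermitian) (y : n → ℂ) :
    eigenCoord h ((h.eigenvectorUnitary : Matrix n n ℂ) *ᵥ y) = y := by
  rw [eigenCoord, mulVec_mulVec, ← star_eq_conjTranspose, Unitary.coe_star_mul_self, one_mulVec]

lemma star_dotProduct_eq_sum_eigenCoord (h : ρ.IsHermitian) (x z : n → ℂ) :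
    star x ⬝ᵥ z = ∑ j, star (eigenCoord h x j) * eigenCoord h z j := by
  have hunitary : star (eigenCoord h x) ⬝ᵥ eigenCoord h z = star x ⬝ᵥ z := by
    rw [eigenCoord, eigenCoord, star_mulVec, ← dotProduct_mulVec, mulVec_mulVec,
      conjTranspose_conjTranspose, ← star_eq_conjTranspose,
      Unitary.mul_star_self_of_mem h.eigenvectorUnitary.2, one_mulVec]
  exact hunitary.symm

lemma eigenCoord_mulVec (h : ρ.IsHermitian) (x : n → ℂ) (j : n) :
    eigenCoord h (ρ *ᵥ x) j = h.eigenvalues j * eigenCoord h x j := by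
  have hρ : (h.eigenvectorUnitary : Matrix n n ℂ)ᴴ * ρ
      = diagonal (RCLike.ofReal ∘ h.eigenvalues) * (h.eigenvectorUnitary : Matrix n n ℂ)ᴴ := by
    conv_lhs => rhs; rw [h.spectral_theorem, Unitary.conjStarAlgAut_apply]
    rw [← mul_assoc, ← mul_assoc, ← star_eq_conjTranspose, Unitary.coe_star_mul_self, one_mul]
  rw [eigenCoord, mulVec_mulVec, hρ, ← mulVec_mulVec, mulVec_diagonal]
  rfl

lemma star_dotProduct_mulVec_eq_sum_eigenCoord (h : ρ.IsHermitian) (x z : n → ℂ) :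
    star x ⬝ᵥ ρ *ᵥ z = ∑ j, h.eigenvalues j * (star (eigenCoord h x j) * eigenCoord h z j) := by
  rw [star_dotProduct_eq_sum_eigenCoord h]
  refine Finset.sum_congr rfl fun j _ => ?_
  rw [eigenCoord_mulVec]
  ring

lemma star_mul_self_eq_normSq (z : ℂ) : star z * z = (Complex.normSq z : ℂ) :=
  Complex.normSq_eq_conj_mul_self.symm

/-- The squared overlap `|⟨k|eⱼ⟩|²` of the `k`-th standard basis vector with the `j`-th eigenvector
of the Hermitian matrix `ρ`. -/
def eigenWeight (h : ρ.IsHermitian) (k j : n) : ℝ :=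
  Complex.normSq (eigenCoord h (Pi.single k 1) j)

lemma sum_eigenWeight_mul_eigenvalues (h : ρ.IsHermitian) (k : n) :
    ∑ j, eigenWeight h k j * h.eigenvalues j = (ρ k k).re := by
  have hdiag : ρ k k = star (Pi.single k (1 : ℂ)) ⬝ᵥ ρ *ᵥ Pi.single k 1 := by simp
  rw [hdiag, star_dotProduct_mulVec_eq_sum_eigenCoord h, Complex.re_sum]
  refine Finset.sum_congr rfl fun j _ => ?_
  rw [star_mul_self_eq_normSq, ← Complex.ofReal_mul, Complex.ofReal_re, eigenWeight, mul_comm]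

lemma sum_eigenWeight (h : ρ.IsHermitian) (j : n) : ∑ k, eigenWeight h k j = 1 := by
  have hcol : (star (h.eigenvectorUnitary : Matrix n n ℂ)
      * (h.eigenvectorUnitary : Matrix n n ℂ)) j j = 1 := by
    rw [Unitary.coe_star_mul_self, one_apply_eq]
  rw [mul_apply] at hcol
  apply Complex.ofReal_injective
  rw [Complex.ofReal_one, ← hcol, Complex.ofReal_sum]
  refine Finset.sum_congr rfl fun k _ => ?_
  rw [eigenWeight, eigenCoord, mulVec_single_one, ← star_mul_self_eq_normSq, col_apply,
    conjTranspose_apply, star_star, star_apply, mul_comm]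

lemma eigenvalues_pos_and_diag_pos_of_eigenWeight_mul_ne_zero (h : ρ.PosSemidef) {k j : n}
    (hj : eigenWeight h.isHermitian k j * h.isHermitian.eigenvalues j ≠ 0) :
    0 < h.isHermitian.eigenvalues j ∧ 0 < (ρ k k).re := by
  have hnonneg (i : n) : 0 ≤ eigenWeight h.isHermitian k i * h.isHermitian.eigenvalues i :=
    mul_nonneg (Complex.normSq_nonneg _) (h.eigenvalues_nonneg i)
  refine ⟨(h.eigenvalues_nonneg j).lt_of_ne' (right_ne_zero_of_mul hj), ?_⟩
  rw [← sum_eigenWeight_mul_eigenvalues h.isHermitian]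
  exact Finset.sum_pos' (fun i _ => hnonneg i) ⟨j, Finset.mem_univ j, (hnonneg j).lt_of_ne' hj⟩

/-- The relative entropy of coherence `H(diag ρ) - S(ρ)` with respect to the standard basis. -/
def relEntropyCoherence (ρ : Matrix n n ℂ) : ℝ :=
  shannonEntropy (fun k => (ρ k k).re) - vonNeumannEntropy ρ

/-- The contribution `⟨k|ρ log ρ|k⟩ - ρₖₖ log ρₖₖ` of the `k`-th basis vector to the relative
entropy of coherence, in nats and in terms of the eigenvalues of `ρ`. -/
def localCoherence (h : ρ.IsHermitian) (k : n) : ℝ :=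
  ∑ j, eigenWeight h k j * h.eigenvalues j * (Real.log (h.eigenvalues j) - Real.log (ρ k k).re)

lemma relEntropyCoherence_eq_sum_localCoherence_div (h : ρ.IsHermitian) :
    relEntropyCoherence ρ = (∑ k, localCoherence h k) / Real.log 2 := by
  have hlog : ∑ k, ∑ j, eigenWeight h k j * h.eigenvalues j * Real.log (h.eigenvalues j)
      = ∑ j, h.eigenvalues j * Real.log (h.eigenvalues j) := by
    rw [Finset.sum_comm]
    simp only [← Finset.sum_mul, sum_eigenWeight, one_mul]
  simp only [relEntropyCoherence, localCoherence, vonNeumannEntropy, dif_pos h,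
    shannonEntropy_eq_sum_negMulLog_div, mul_sub, Finset.sum_sub_distrib, hlog]
  simp only [← Finset.sum_mul, sum_eigenWeight_mul_eigenvalues, Real.negMulLog, neg_mul,
    Finset.sum_neg_distrib]
  ring

/-- The resolvent expression `⟨k|ρ (ρₖₖ + t ρ)⁻¹ ρ|k⟩`, in terms of the eigenvalues of `ρ`. -/
def resolventSum (h : ρ.IsHermitian) (k : n) (t : ℝ) : ℝ :=
  ∑ j, eigenWeight h k j * h.eigenvalues j
    * (h.eigenvalues j / ((ρ k k).re + t * h.eigenvalues j))

/-- The quadratic functional `2 Re⟨x|ρ|k⟩ - ⟨x|(ρₖₖ + t ρ)|x⟩` of `x`. It is linear in `ρ` and its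
maximum over `x` is `resolventSum`. -/
def resolventForm (ρ : Matrix n n ℂ) (k : n) (t : ℝ) (x : n → ℂ) : ℝ :=
  2 * (star x ⬝ᵥ ρ *ᵥ Pi.single k 1).re - (ρ k k).re * (star x ⬝ᵥ x).re
    - t * (star x ⬝ᵥ ρ *ᵥ x).re

lemma resolventForm_sum {ι : Type*} [Fintype ι] (σ : ι → Matrix n n ℂ) (k : n) (t : ℝ)
    (x : n → ℂ) : resolventForm (∑ i, σ i) k t x = ∑ i, resolventForm (σ i) k t x := by
  simp only [resolventForm, sum_mulVec, dotProduct_sum, Complex.re_sum, Matrix.sum_apply,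
    Finset.sum_sub_distrib, Finset.mul_sum, Finset.sum_mul]

lemma two_mul_re_sub_mul_normSq {l r : ℝ} (h : r = 0 → l = 0) (y c : ℂ) :
    2 * l * (star y * c).re - r * Complex.normSq y
      = Complex.normSq c * l * (l / r) - r * Complex.normSq (y - (l / r : ℝ) * c) := by
  rcases eq_or_ne r 0 with hr | hr
  · simp [hr, h hr]
  · simp only [Complex.star_def, Complex.normSq_apply, Complex.sub_re, Complex.sub_im,
      Complex.mul_re, Complex.mul_im, Complex.conj_re, Complex.conj_im, Complex.ofReal_re,
      Complex.ofReal_im, zero_mul, sub_zero, add_zero]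
    field_simp
    ring

lemma diag_re_nonneg {m : Type*} {A : Matrix m m ℂ} (h : A.PosSemidef) (i : m) :
    0 ≤ (A i i).re :=
  (Complex.nonneg_iff.1 h.diag_nonneg).1

lemma resolventForm_eq_resolventSum_sub (h : ρ.PosSemidef) (k : n) {t : ℝ} (ht : 0 < t)
    (x : n → ℂ) :
    resolventForm ρ k t x = resolventSum h.isHermitian k t
      - ∑ j, ((ρ k k).re + t * h.isHermitian.eigenvalues j)
        * Complex.normSq (eigenCoord h.isHermitian x j
          - (h.isHermitian.eigenvalues j / ((ρ k k).re + t * h.isHermitian.eigenvalues j) : ℝ)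
            * eigenCoord h.isHermitian (Pi.single k 1) j) := by
  have hzero (j : n) (hj : (ρ k k).re + t * h.isHermitian.eigenvalues j = 0) :
      h.isHermitian.eigenvalues j = 0 := by
    nlinarith [diag_re_nonneg h k, h.eigenvalues_nonneg j,
      mul_nonneg ht.le (h.eigenvalues_nonneg j)]
  rw [resolventForm, resolventSum, star_dotProduct_mulVec_eq_sum_eigenCoord h.isHermitian,
    star_dotProduct_mulVec_eq_sum_eigenCoord h.isHermitian,
    star_dotProduct_eq_sum_eigenCoord h.isHermitian]
  simp only [star_mul_self_eq_normSq, ← Complex.ofReal_mul, Complex.re_sum, Complex.ofReal_re,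
    Complex.re_ofReal_mul, Finset.mul_sum, ← Finset.sum_sub_distrib]
  refine Finset.sum_congr rfl fun j _ => ?_
  rw [eigenWeight, ← two_mul_re_sub_mul_normSq (hzero j)]
  ring

lemma isGreatest_range_resolventForm (h : ρ.PosSemidef) (k : n) {t : ℝ} (ht : 0 < t) :
    IsGreatest (Set.range (resolventForm ρ k t)) (resolventSum h.isHermitian k t) := by
  constructor
  · refine ⟨(h.isHermitian.eigenvectorUnitary : Matrix n n ℂ) *ᵥ fun j =>
      (h.isHermitian.eigenvalues j / ((ρ k k).re + t * h.isHermitian.eigenvalues j) : ℝ)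
        * eigenCoord h.isHermitian (Pi.single k 1) j, ?_⟩
    simp [resolventForm_eq_resolventSum_sub h k ht, eigenCoord_eigenvectorUnitary_mulVec]
  · rintro _ ⟨x, rfl⟩
    rw [resolventForm_eq_resolventSum_sub h k ht]
    exact sub_le_self _ (Finset.sum_nonneg fun j _ => mul_nonneg
      (add_nonneg (diag_re_nonneg h k) (mul_nonneg ht.le (h.eigenvalues_nonneg j)))
      (Complex.normSq_nonneg _))

/-- A primitive of `t ↦ resolventSum h k t` on `[0, ∞)` when `ρ` is positive semidefinite. -/
def resolventPrimitive (h : ρ.IsHermitian) (k : n) (t : ℝ) : ℝ :=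
  ∑ j, eigenWeight h k j * h.eigenvalues j * Real.log ((ρ k k).re + t * h.eigenvalues j)

lemma hasDerivAt_resolventPrimitive (h : ρ.PosSemidef) (k : n) {t : ℝ} (ht : 0 ≤ t) :
    HasDerivAt (resolventPrimitive h.isHermitian k) (resolventSum h.isHermitian k t) t :=
  HasDerivAt.fun_sum fun _ _ => hasDerivAt_mul_log_add_mul fun hj =>
    have ⟨hl, hm⟩ := eigenvalues_pos_and_diag_pos_of_eigenWeight_mul_ne_zero h hj
    (add_pos_of_pos_of_nonneg hm (mul_nonneg ht hl.le)).ne'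

lemma tendsto_resolventPrimitive_sub (h : ρ.PosSemidef) (k : n) :
    Tendsto (fun t => resolventPrimitive h.isHermitian k t - resolventPrimitive h.isHermitian k 0
      - (ρ k k).re * Real.log t) atTop (𝓝 (localCoherence h.isHermitian k)) := by
  have hlim := tendsto_finsetSum Finset.univ fun (j : n) _ =>
    (tendsto_mul_log_add_mul_sub_log (ρ k k).re fun hj =>
      (eigenvalues_pos_and_diag_pos_of_eigenWeight_mul_ne_zero h (k := k) (j := j) hj).1).sub_const
      (eigenWeight h.isHermitian k j * h.isHermitian.eigenvalues j * Real.log (ρ k k).re)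
  convert hlim using 2
  · simp only [resolventPrimitive, zero_mul, add_zero, mul_sub, Finset.sum_sub_distrib,
      ← Finset.sum_mul, sum_eigenWeight_mul_eigenvalues]
    ring
  · simp only [localCoherence, mul_sub]

variable {ι : Type*} [Fintype ι] {σ : ι → Matrix n n ℂ}

lemma resolventSum_sum_le (hσ : ∀ i, (σ i).PosSemidef) (hsum : (∑ i, σ i).PosSemidef) (k : n)
    {t : ℝ} (ht : 0 < t) :
    resolventSum hsum.isHermitian k t ≤ ∑ i, resolventSum (hσ i).isHermitian k t := by
  obtain ⟨x, hx⟩ := (isGreatest_range_resolventForm hsum k ht).1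
  rw [← hx, resolventForm_sum]
  exact Finset.sum_le_sum fun i _ => (isGreatest_range_resolventForm (hσ i) k ht).2 ⟨x, rfl⟩

lemma monotoneOn_sum_resolventPrimitive_sub (hσ : ∀ i, (σ i).PosSemidef)
    (hsum : (∑ i, σ i).PosSemidef) (k : n) :
    MonotoneOn (fun t => ∑ i, resolventPrimitive (hσ i).isHermitian k t
      - resolventPrimitive hsum.isHermitian k t) (Set.Ici 0) := by
  have hderiv (t : ℝ) (ht : 0 ≤ t) := (HasDerivAt.fun_sum fun i (_ : i ∈ Finset.univ) =>
    hasDerivAt_resolventPrimitive (hσ i) k ht).sub (hasDerivAt_resolventPrimitive hsum k ht)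
  refine monotoneOn_of_hasDerivWithinAt_nonneg (convex_Ici 0)
    (fun t ht => (hderiv t ht).continuousAt.continuousWithinAt)
    (fun t ht => (hderiv t (interior_subset ht)).hasDerivWithinAt) fun t ht => ?_
  rw [interior_Ici] at ht
  exact sub_nonneg.2 (resolventSum_sum_le hσ hsum k ht)

lemma localCoherence_sum_le (hσ : ∀ i, (σ i).PosSemidef) (hsum : (∑ i, σ i).PosSemidef) (k : n) :
    localCoherence hsum.isHermitian k ≤ ∑ i, localCoherence (hσ i).isHermitian k := by
  have hlim := (tendsto_finsetSum Finset.univ fun i _ =>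
    tendsto_resolventPrimitive_sub (hσ i) k).sub (tendsto_resolventPrimitive_sub hsum k)
  refine sub_nonneg.1 (ge_of_tendsto hlim ?_)
  filter_upwards [eventually_ge_atTop 0] with t ht
  have hmono := monotoneOn_sum_resolventPrimitive_sub hσ hsum k Set.self_mem_Ici ht ht
  simp only [Finset.sum_sub_distrib, ← Finset.sum_mul, Matrix.sum_apply, Complex.re_sum] at hmono ⊢
  linarith

theorem relEntropyCoherence_sum_le (hσ : ∀ i, (σ i).PosSemidef) :
    relEntropyCoherence (∑ i, σ i) ≤ ∑ i, relEntropyCoherence (σ i) := by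
  have hsum : (∑ i, σ i).PosSemidef := posSemidef_sum _ fun i _ => hσ i
  simp only [relEntropyCoherence_eq_sum_localCoherence_div hsum.isHermitian,
    fun i => relEntropyCoherence_eq_sum_localCoherence_div (hσ i).isHermitian, ← Finset.sum_div]
  rw [Finset.sum_comm (s := (Finset.univ : Finset ι))]
  gcongr with k
  exact localCoherence_sum_le hσ hsum k

end Coherence

section ReducedState

variable {U V : Type*}

lemma trLeft_outer_eq [Fintype U] (ψ : U × V → ℂ) :
    trLeft (outer ψ) = (of fun u v => ψ (u, v))ᵀ * (of fun u v => ψ (u, v))ᵀᴴ := by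
  ext i j
  simp [trLeft, outer, mul_apply]

lemma posSemidef_trLeft_outer [Fintype U] [Finite V] (ψ : U × V → ℂ) :
    (trLeft (outer ψ)).PosSemidef := by
  rw [trLeft_outer_eq]
  exact posSemidef_self_mul_conjTranspose _

lemma trLeft_outer_comp_swap [Fintype V] (ψ : U × V → ℂ) :
    trLeft (outer (ψ ∘ Prod.swap))
      = (of fun u v => ψ (u, v)) * (of fun u v => ψ (u, v))ᴴ :=
  trLeft_outer_eq _

lemma vonNeumannEntropy_trLeft_outer_comp_swap [Fintype U] [DecidableEq U] [Fintype V]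
    [DecidableEq V] (ψ : U × V → ℂ) :
    vonNeumannEntropy (trLeft (outer (ψ ∘ Prod.swap))) = vonNeumannEntropy (trLeft (outer ψ)) := by
  set A : Matrix U V ℂ := of fun u v => ψ (u, v)
  have htranspose : trLeft (outer ψ) = (Aᴴ * A)ᵀ := by
    rw [trLeft_outer_eq, transpose_mul]
    rfl
  rw [trLeft_outer_comp_swap, htranspose,
    vonNeumannEntropy_transpose (isHermitian_conjTranspose_mul_self A),
    vonNeumannEntropy_mul_comm (isHermitian_mul_conjTranspose_self A)
      (isHermitian_conjTranspose_mul_self A)]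

lemma trLeft_outer_comp_prodMap {X Y : Type*} [Fintype U] [Fintype X] (eX : X ≃ U)
    (eY : Y → V) (ψ : U × V → ℂ) :
    trLeft (outer (ψ ∘ Prod.map eX eY)) = (trLeft (outer ψ)).submatrix eY eY := by
  ext i j
  exact eX.sum_comp fun u => outer ψ (u, eY i) (u, eY j)

lemma trLeft_outer_smul [Fintype U] (c : ℂ) (ψ : U × V → ℂ) :
    trLeft (outer (c • ψ)) = Complex.normSq c • trLeft (outer ψ) := by
  ext i j
  simp only [trLeft, outer, Pi.smul_apply, smul_eq_mul, map_mul, Matrix.smul_apply, Finset.smul_sum,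
    Complex.real_smul, ← Complex.mul_conj]
  exact Finset.sum_congr rfl fun _ _ => by ring

lemma trLeft_outer_eq_sum {A ι : Type*} [Fintype A] [Fintype ι] (ψ : (A × ι) × V → ℂ) :
    trLeft (outer ψ) = ∑ i, trLeft (outer (ψ ∘ Prod.map (·, i) id)) := by
  ext v v'
  simp only [trLeft, outer, Matrix.sum_apply, Fintype.sum_prod_type_right]
  rfl

lemma normSq_regEmbed {Q : U × V → ℝ} (hQ : ∀ p, 0 ≤ Q p) (θ : U × V → ℝ) (p : U × V) :
    Complex.normSq (regEmbed Q θ p) = Q p := by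
  rw [regEmbed, Complex.normSq_mul, Complex.normSq_ofReal, Real.mul_self_sqrt (hQ p),
    Complex.normSq_eq_norm_sq, Complex.norm_exp_ofReal_mul_I, one_pow, one_mul]

lemma trLeft_outer_regEmbed_diag [Fintype U] {Q : U × V → ℝ} (hQ : ∀ p, 0 ≤ Q p)
    (θ : U × V → ℝ) (v : V) :
    trLeft (outer (regEmbed Q θ)) v v = margY Q v := by
  simp only [trLeft, outer, margY, Complex.mul_conj, normSq_regEmbed hQ, Complex.ofReal_sum]

lemma regEmbed_smul {c : ℝ} (hc : 0 ≤ c) (Q θ : U × V → ℝ) :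
    regEmbed (c • Q) θ = (√c : ℂ) • regEmbed Q θ := by
  ext p
  simp only [regEmbed, Pi.smul_apply, smul_eq_mul, Real.sqrt_mul hc, Complex.ofReal_mul]
  ring

end ReducedState

section MutualInfo

variable {U V : Type*} [Fintype U] [Fintype V]

lemma mutualInfo_comp_swap (Q : U × V → ℝ) : mutualInfo (Q ∘ Prod.swap) = mutualInfo Q := by
  have hjoint : shannonEntropy (Q ∘ Prod.swap) = shannonEntropy Q :=
    shannonEntropy_comp_equiv (Equiv.prodComm V U) Q
  rw [mutualInfo, mutualInfo, hjoint, add_comm (shannonEntropy (margX Q))]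
  rfl

lemma mutualInfo_comp_prodMap_equiv {X Y : Type*} [Fintype X] [Fintype Y] (eX : X ≃ U)
    (eY : Y ≃ V) (Q : U × V → ℝ) : mutualInfo (Q ∘ Prod.map eX eY) = mutualInfo Q := by
  have hX : margX (Q ∘ Prod.map eX eY) = margX Q ∘ eX :=
    funext fun x => eY.sum_comp fun v => Q (eX x, v)
  have hY : margY (Q ∘ Prod.map eX eY) = margY Q ∘ eY :=
    funext fun y => eX.sum_comp fun u => Q (u, eY y)
  rw [mutualInfo, hX, hY, shannonEntropy_comp_equiv, shannonEntropy_comp_equiv,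
    ← Equiv.prodCongr_apply, shannonEntropy_comp_equiv, mutualInfo]

lemma mutualInfo_smul (c : ℝ) (Q : U × V → ℝ) :
    mutualInfo (c • Q)
      = c * mutualInfo Q + (∑ p, Q p) * (Real.negMulLog c / Real.log 2) := by
  have hX : margX (c • Q) = c • margX Q := funext fun u => (Finset.mul_sum _ _ _).symm
  have hY : margY (c • Q) = c • margY Q := funext fun v => (Finset.mul_sum _ _ _).symm
  have hsumX : ∑ u, margX Q u = ∑ p, Q p := (Fintype.sum_prod_type Q).symm
  have hsumY : ∑ v, margY Q v = ∑ p, Q p := (Fintype.sum_prod_type_right Q).symm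
  rw [mutualInfo, hX, hY, shannonEntropy_smul, shannonEntropy_smul, shannonEntropy_smul, hsumX,
    hsumY, mutualInfo]
  ring

end MutualInfo

section RegularLeakage

variable {U V : Type*} [Fintype U] [Fintype V] [DecidableEq V]

lemma regLeakage_eq_sub_relEntropyCoherence {Q : U × V → ℝ} (hQ : ∀ p, 0 ≤ Q p) (θ : U × V → ℝ) :
    regLeakage Q θ = shannonEntropy Q - shannonEntropy (margX Q)
      - relEntropyCoherence (trLeft (outer (regEmbed Q θ))) := by
  simp only [regLeakage, mutualInfo, relEntropyCoherence, trLeft_outer_regEmbed_diag hQ,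
    Complex.ofReal_re]
  ring

lemma regLeakage_comp_swap [DecidableEq U] (Q θ : U × V → ℝ) :
    regLeakage (Q ∘ Prod.swap) (θ ∘ Prod.swap) = regLeakage Q θ := by
  rw [regLeakage, mutualInfo_comp_swap, regLeakage,
    ← vonNeumannEntropy_trLeft_outer_comp_swap (regEmbed Q θ)]
  rfl

lemma regLeakage_comp_prodMap_equiv {X Y : Type*} [Fintype X] [Fintype Y] [DecidableEq Y]
    (eX : X ≃ U) (eY : Y ≃ V) (Q θ : U × V → ℝ) :
    regLeakage (Q ∘ Prod.map eX eY) (θ ∘ Prod.map eX eY) = regLeakage Q θ := by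
  have hembed : regEmbed (Q ∘ Prod.map eX eY) (θ ∘ Prod.map eX eY)
      = regEmbed Q θ ∘ Prod.map eX eY := rfl
  rw [regLeakage, hembed, trLeft_outer_comp_prodMap, mutualInfo_comp_prodMap_equiv,
    vonNeumannEntropy_submatrix_equiv eY (posSemidef_trLeft_outer _).isHermitian, regLeakage]

lemma regLeakage_smul {Q : U × V → ℝ} (hQ : ∀ p, 0 ≤ Q p) {c : ℝ} (hc : 0 ≤ c) (θ : U × V → ℝ) :
    regLeakage (c • Q) θ = c * regLeakage Q θ := by
  have htrace : (trLeft (outer (regEmbed Q θ))).trace.re = ∑ p, Q p := by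
    simp only [trace, diag_apply, trLeft_outer_regEmbed_diag hQ, Complex.re_sum,
      Complex.ofReal_re, margY, Fintype.sum_prod_type_right]
  rw [regLeakage, regEmbed_smul hc, trLeft_outer_smul, Complex.normSq_ofReal,
    Real.mul_self_sqrt hc, vonNeumannEntropy_smul (posSemidef_trLeft_outer _).isHermitian,
    htrace, mutualInfo_smul, regLeakage]
  ring

lemma sum_regLeakage_block_fst_le {A ι : Type*} [Fintype A] [Fintype ι] {Q : (A × ι) × V → ℝ}
    (hQ : ∀ p, 0 ≤ Q p) (θ : (A × ι) × V → ℝ) :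
    ∑ i, regLeakage (Q ∘ Prod.map (·, i) id) (θ ∘ Prod.map (·, i) id) ≤ regLeakage Q θ := by
  have hjoint : ∑ i, shannonEntropy (Q ∘ Prod.map (·, i) id) = shannonEntropy Q := by
    simp only [shannonEntropy, Fintype.sum_prod_type, Finset.sum_neg_distrib]
    rw [Finset.sum_comm]
    rfl
  have hmarg : ∑ i, shannonEntropy (margX (Q ∘ Prod.map (·, i) id)) = shannonEntropy (margX Q) :=
    sum_shannonEntropy_slice (margX Q)
  have hcoherence := relEntropyCoherence_sum_le fun i : ι =>
    posSemidef_trLeft_outer (regEmbed Q θ ∘ Prod.map (·, i) id)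
  rw [← trLeft_outer_eq_sum] at hcoherence
  simp only [regLeakage_eq_sub_relEntropyCoherence hQ,
    fun i => regLeakage_eq_sub_relEntropyCoherence
      (Q := Q ∘ Prod.map (·, i) id) fun _ => hQ _, Finset.sum_sub_distrib, hjoint, hmarg]
  exact sub_le_sub_left hcoherence _

lemma sum_regLeakage_block_le {A B ι κ : Type*} [Fintype A] [Fintype B] [DecidableEq B]
    [Fintype ι] [Fintype κ] [DecidableEq κ] {Q : (A × ι) × (B × κ) → ℝ} (hQ : ∀ p, 0 ≤ Q p)
    (θ : (A × ι) × (B × κ) → ℝ) :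
    ∑ q : ι × κ, regLeakage (Q ∘ Prod.map (·, q.1) (·, q.2)) (θ ∘ Prod.map (·, q.1) (·, q.2))
      ≤ regLeakage Q θ := by
  classical
  have hsnd (i : ι) := sum_regLeakage_block_fst_le
    (Q := (Q ∘ Prod.map (·, i) id) ∘ Prod.swap) (fun _ => hQ _)
    ((θ ∘ Prod.map (·, i) id) ∘ Prod.swap)
  have hswap (i : ι) (k : κ) := regLeakage_comp_swap (Q ∘ Prod.map (·, i) (·, k))
    (θ ∘ Prod.map (·, i) (·, k))
  calc
    _ = ∑ i, ∑ k, regLeakage (Q ∘ Prod.map (·, i) (·, k)) (θ ∘ Prod.map (·, i) (·, k)) :=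
      Fintype.sum_prod_type _
    _ ≤ ∑ i, regLeakage (Q ∘ Prod.map (·, i) id) (θ ∘ Prod.map (·, i) id) := by
      gcongr with i
      rw [← regLeakage_comp_swap (Q ∘ Prod.map (·, i) id)]
      simp only [← hswap]
      exact hsnd i
    _ ≤ regLeakage Q θ := sum_regLeakage_block_fst_le hQ θ

lemma regLeakage_eq_zero_of_unique [Unique V] {Q : U × V → ℝ} (hQ : ∀ p, 0 ≤ Q p) (θ : U × V → ℝ) :
    regLeakage Q θ = 0 := by
  have hstate : trLeft (outer (regEmbed Q θ)) = diagonal fun v => (margY Q v : ℂ) := by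
    ext v v'
    rw [Subsingleton.elim v' v, diagonal_apply_eq, trLeft_outer_regEmbed_diag hQ]
  have hmarg : shannonEntropy (margX Q) = shannonEntropy Q := by
    simp [shannonEntropy, margX, Fintype.sum_prod_type]
  rw [regLeakage, hstate, vonNeumannEntropy_diagonal, mutualInfo, hmarg]
  ring

lemma regLeakage_nonneg {Q : U × V → ℝ} (hQ : ∀ p, 0 ≤ Q p) (θ : U × V → ℝ) :
    0 ≤ regLeakage Q θ := by
  classical
  have hblocks := sum_regLeakage_block_fst_le
    (Q := Q ∘ Prod.map (Equiv.punitProd.{0} U) (Equiv.refl V)) (fun _ => hQ _)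
    (θ ∘ Prod.map (Equiv.punitProd.{0} U) (Equiv.refl V))
  rw [regLeakage_comp_prodMap_equiv] at hblocks
  refine (Finset.sum_eq_zero fun u _ => ?_).ge.trans hblocks
  rw [← regLeakage_comp_swap]
  exact regLeakage_eq_zero_of_unique (fun _ => hQ _) _

end RegularLeakage

section PrimitiveLeakage

variable {U V : Type*} [Fintype U] [Fintype V] [DecidableEq V] {Q : U × V → ℝ}

lemma primLeakage_le_regLeakage (hQ : ∀ p, 0 ≤ Q p) (θ : U × V → ℝ) :
    primLeakage Q ≤ regLeakage Q θ :=
  ciInf_le ⟨0, Set.forall_mem_range.2 (regLeakage_nonneg hQ)⟩ θ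

lemma primLeakage_nonneg (hQ : ∀ p, 0 ≤ Q p) : 0 ≤ primLeakage Q :=
  le_ciInf (regLeakage_nonneg hQ)

lemma primLeakage_comp_prodMap_equiv {X Y : Type*} [Fintype X] [Fintype Y] [DecidableEq Y]
    (eX : X ≃ U) (eY : Y ≃ V) (Q : U × V → ℝ) :
    primLeakage (Q ∘ Prod.map eX eY) = primLeakage Q :=
  (((eX.prodCongr eY).symm.arrowCongr (Equiv.refl ℝ)).iInf_congr fun θ =>
    regLeakage_comp_prodMap_equiv eX eY Q θ).symm

lemma primLeakage_smul (hQ : ∀ p, 0 ≤ Q p) {c : ℝ} (hc : 0 ≤ c) :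
    primLeakage (c • Q) = c * primLeakage Q := by
  simp only [primLeakage, regLeakage_smul hQ hc, Real.mul_iInf_of_nonneg hc]

lemma sum_primLeakage_block_le {A B ι κ : Type*} [Fintype A] [Fintype B] [DecidableEq B]
    [Fintype ι] [Fintype κ] [DecidableEq κ] {Q : (A × ι) × (B × κ) → ℝ} (hQ : ∀ p, 0 ≤ Q p) :
    ∑ q : ι × κ, primLeakage (Q ∘ Prod.map (·, q.1) (·, q.2)) ≤ primLeakage Q :=
  le_ciInf fun θ => (Finset.sum_le_sum fun _ _ =>
    primLeakage_le_regLeakage (fun _ => hQ _) _).trans (sum_regLeakage_block_le hQ θ)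

lemma primLeakage_eq_mul_of_relabeling {X Y : Type*} [Fintype X] [Fintype Y] [DecidableEq Y]
    {P : X × Y → ℝ} (hP : ∀ p, 0 ≤ P p) {c : ℝ} (hc : 0 ≤ c) {eX : X ≃ U} {eY : Y ≃ V}
    (h : ∀ a b, Q (eX a, eY b) = c * P (a, b)) : primLeakage Q = c * primLeakage P := by
  rw [← primLeakage_smul hP hc, ← primLeakage_comp_prodMap_equiv eX eY]
  exact congrArg primLeakage (funext fun p => h p.1 p.2)

end PrimitiveLeakage

section Reduction

variable {X Y X₀ X₁ Y₀ Y₁ : Type*} [Fintype X] [Fintype Y] [Fintype X₀] [Fintype X₁]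
  [Fintype Y₀] [Fintype Y₁]

lemma eq_sum_mul_of_div_sum_eq {f : X₀ → Y₀ → ℝ} (hf : ∀ u v, 0 ≤ f u v) {u : X₀} {v : Y₀}
    {r : ℝ} (h : f u v / (∑ u, ∑ v, f u v) = r) : f u v = (∑ u, ∑ v, f u v) * r := by
  have hle : f u v ≤ ∑ u, ∑ v, f u v :=
    (Finset.single_le_sum (fun v _ => hf u v) (Finset.mem_univ v)).trans
      (Finset.single_le_sum (fun u _ => Finset.sum_nonneg fun v _ => hf u v) (Finset.mem_univ u))
  rw [← h, mul_div_cancel_of_imp' fun hzero => (hle.trans_eq hzero).antisymm (hf u v)]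

theorem reduction_leakage_general [DecidableEq Y] [DecidableEq Y₀] [DecidableEq Y₁]
    {P : X × Y → ℝ} (hP : ∀ p, 0 ≤ P p) {Pt : (X₀ × X₁) × (Y₀ × Y₁) → ℝ} (hPt : ∀ p, 0 ≤ Pt p)
    {s : Finset (X₁ × Y₁)} {w : X₁ × Y₁ → ℝ} (hw : ∀ q ∈ s, 0 ≤ w q)
    (h : ∀ q ∈ s, ∃ (eX : X ≃ X₀) (eY : Y ≃ Y₀), ∀ a b,
      Pt ((eX a, q.1), (eY b, q.2)) = w q * P (a, b)) :
    (∑ q ∈ s, w q) * primLeakage P ≤ primLeakage Pt := by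
  have hblock (q : X₁ × Y₁) (hq : q ∈ s) :
      primLeakage (Pt ∘ Prod.map (·, q.1) (·, q.2)) = w q * primLeakage P := by
    obtain ⟨eX, eY, he⟩ := h q hq
    exact primLeakage_eq_mul_of_relabeling hP (hw q hq) he
  calc
    _ = ∑ q ∈ s, primLeakage (Pt ∘ Prod.map (·, q.1) (·, q.2)) := by
      rw [Finset.sum_mul, Finset.sum_congr rfl hblock]
    _ ≤ ∑ q : X₁ × Y₁, primLeakage (Pt ∘ Prod.map (·, q.1) (·, q.2)) :=
      Finset.sum_le_univ_sum_of_nonneg fun q => primLeakage_nonneg fun _ => hPt _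
    _ ≤ primLeakage Pt := sum_primLeakage_block_le hPt

end Reduction

/-- if with probability at least `1 − δ` (over `(X̃₁,Ỹ₁)`) the conditional
distribution `P_{X̃₀,Ỹ₀|X̃₁=x,Ỹ₁=y}` equals `P_{X,Y}` up to a bijective relabeling of
the alphabets, then `Δ_{P_{X̃,Ỹ}} ≥ (1 − δ)·Δ_{P_{X,Y}}`. -/
theorem reduction_leakage
    {𝒳 𝒴 𝒳₀ 𝒳₁ 𝒴₀ 𝒴₁ : Type*}
    [Fintype 𝒳] [Fintype 𝒴] [Fintype 𝒳₀] [Fintype 𝒳₁] [Fintype 𝒴₀] [Fintype 𝒴₁]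
    [DecidableEq 𝒳] [DecidableEq 𝒴] [DecidableEq 𝒳₀] [DecidableEq 𝒳₁]
    [DecidableEq 𝒴₀] [DecidableEq 𝒴₁]
    (P : 𝒳 × 𝒴 → ℝ) (hP0 : ∀ p, 0 ≤ P p) (hP1 : ∑ p, P p = 1)
    (Pt : (𝒳₀ × 𝒳₁) × (𝒴₀ × 𝒴₁) → ℝ) (hPt0 : ∀ p, 0 ≤ Pt p) (hPt1 : ∑ p, Pt p = 1)
    (δ : ℝ)
    (hδ : 1 - δ ≤
      ∑ q ∈ Finset.univ.filter (fun q : 𝒳₁ × 𝒴₁ =>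
        ∃ (eX : 𝒳 ≃ 𝒳₀) (eY : 𝒴 ≃ 𝒴₀), ∀ a b,
          Pt ((eX a, q.1), (eY b, q.2)) /
              (∑ u, ∑ v, Pt ((u, q.1), (v, q.2))) = P (a, b)),
        ∑ u, ∑ v, Pt ((u, q.1), (v, q.2))) :
    primLeakage Pt ≥ (1 - δ) * primLeakage P := by
  refine (mul_le_mul_of_nonneg_right hδ (primLeakage_nonneg hP0)).trans
    (reduction_leakage_general hP0 hPt0
      (fun q _ => Finset.sum_nonneg fun u _ => Finset.sum_nonneg fun v _ => hPt0 _)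
      fun q hq => ?_)
  obtain ⟨eX, eY, he⟩ := (Finset.mem_filter.1 hq).2
  exact ⟨eX, eY, fun a b => eq_sum_mul_of_div_sum_eq
    (f := fun u v => Pt ((u, q.1), (v, q.2))) (fun _ _ => hPt0 _) (he a b)⟩

end
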